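/- arXiv:2005.12098 — 2 statements merged into one kernel-verified Lean document; each statement's English description precedes it below -/
import Mathlib

section
/- Let (X, k) be a solution of the Skorokhod problem with mean minimality condition and two constraints associated with (h, Y, l, u). Then for every t > 0: if Δk_t = k_t − k_{t−} > 0 then E[h(t, X_t)] = l_t; if Δk_t < 0 then E[h(t, X_t)] = u_t; and in all cases k_t = max( min( k_{t−}, ū_t − E[Y_t] ), l̄_t − E[Y_t] ). -/
open MeasureTheory Filter Set Function Topology

noncomputable section

/-- A function with values in a topological space is càdlàg on `[0,∞)`:
right-continuous at every `t ≥ 0` and admitting a left limit at every `t > 0`. -/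
def CadlagOn {E : Type*} [TopologicalSpace E] (f : ℝ → E) : Prop :=
  (∀ t : ℝ, 0 ≤ t → ContinuousWithinAt f (Set.Ici t) t) ∧
  ∀ t : ℝ, 0 < t → ∃ L : E, Filter.Tendsto f (nhdsWithin t (Set.Iio t)) (nhds L)

/-- Condition (H) on `h : [0,∞) × ℝ → ℝ` with constants `Mh, Lh, ch, Ch`. -/
structure CondH (h : ℝ → ℝ → ℝ) (Mh Lh ch Ch : ℝ) : Prop where
  meas : Measurable (Function.uncurry h)
  Mh_pos : 0 < Mh
  Lh_pos : 0 < Lh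
  ch_pos : 0 < ch
  Ch_pos : 0 < Ch
  growth : ∀ t x : ℝ, 0 ≤ t → |h t x| ≤ Mh * (1 + |x|)
  strict_mono : ∀ t : ℝ, 0 ≤ t → StrictMono (h t)
  lip_time : ∀ s t x : ℝ, 0 ≤ s → 0 ≤ t → |h t x - h s x| ≤ Lh * |t - s|
  lip_lower : ∀ t x y : ℝ, 0 ≤ t → ch * |x - y| ≤ |h t x - h t y|
  lip_upper : ∀ t x y : ℝ, 0 ≤ t → |h t x - h t y| ≤ Ch * |x - y|

/-- A process with càdlàg paths, integrable values, and values uniformly integrable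
on every compact time interval. -/
structure NiceProcess {Ω : Type*} [MeasurableSpace Ω] (μ : Measure Ω) (Y : ℝ → Ω → ℝ) : Prop where
  cadlag : ∀ ω, CadlagOn fun t => Y t ω
  integrable : ∀ t : ℝ, 0 ≤ t → Integrable (Y t) μ
  unifInt : ∀ q : ℝ, 0 ≤ q → UniformIntegrable (fun t : Set.Icc (0:ℝ) q => Y t.1) 1 μ

/-- Solution of the Skorokhod problem with mean minimality condition and two constraints
associated with `(h, Y, l, u)`. -/
def MeanSP {Ω : Type*} [MeasurableSpace Ω] (μ : Measure Ω) (h : ℝ → ℝ → ℝ)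
    (Y : ℝ → Ω → ℝ) (l u : ℝ → ℝ) (X : ℝ → Ω → ℝ) (k : ℝ → ℝ) : Prop :=
  (∀ ω, CadlagOn fun t => X t ω) ∧ CadlagOn k ∧ k 0 = 0 ∧
  (∀ t : ℝ, 0 ≤ t → ∀ ω, X t ω = Y t ω + k t) ∧
  (∀ t : ℝ, 0 ≤ t → (∫ ω, h t (X t ω) ∂μ) ∈ Set.Icc (l t) (u t)) ∧
  (∀ t q : ℝ, 0 ≤ t → t ≤ q →
    ((∀ s : ℝ, t < s → s ≤ q → (∫ ω, h s (X s ω) ∂μ) < u s) → 0 ≤ k q - k t) ∧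
    ((∀ s : ℝ, t < s → s ≤ q → l s < ∫ ω, h s (X s ω) ∂μ) → k q - k t ≤ 0)) ∧
  ∀ t : ℝ, 0 < t →
    ((∫ ω, h t (X t ω) ∂μ) < u t → 0 ≤ k t - Function.leftLim k t) ∧
    (l t < ∫ ω, h t (X t ω) ∂μ → k t - Function.leftLim k t ≤ 0)

/-- Solution of the deterministic Skorokhod problem with two time-dependent barriers. -/
def DetSP (y lb ub x k : ℝ → ℝ) : Prop :=
  CadlagOn x ∧ CadlagOn k ∧ k 0 = 0 ∧
  (∀ t : ℝ, 0 ≤ t → x t = y t + k t ∧ x t ∈ Set.Icc (lb t) (ub t)) ∧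
  (∀ t q : ℝ, 0 ≤ t → t ≤ q →
    ((∀ s : ℝ, t < s → s ≤ q → x s < ub s) → 0 ≤ k q - k t) ∧
    ((∀ s : ℝ, t < s → s ≤ q → lb s < x s) → k q - k t ≤ 0)) ∧
  ∀ t : ℝ, 0 < t →
    (x t < ub t → 0 ≤ k t - Function.leftLim k t) ∧
    (lb t < x t → k t - Function.leftLim k t ≤ 0)

/-- Solution of the Skorokhod problem with mean minimality condition and a single
lower barrier `l`.  The minimality condition `∫ (E[h(s,X_s)] - l_s) dk_s = 0` is expressed
through any measure `ν` that agrees with the Lebesgue–Stieltjes measure of `k` on `[0,∞)`. -/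
def MeanSPLower {Ω : Type*} [MeasurableSpace Ω] (μ : Measure Ω) (h : ℝ → ℝ → ℝ)
    (Y : ℝ → Ω → ℝ) (l : ℝ → ℝ) (X : ℝ → Ω → ℝ) (k : ℝ → ℝ) : Prop :=
  (∀ ω, CadlagOn fun t => X t ω) ∧ CadlagOn k ∧ k 0 = 0 ∧
  (∀ t : ℝ, 0 ≤ t → ∀ ω, X t ω = Y t ω + k t) ∧
  (∀ t : ℝ, 0 ≤ t → l t ≤ ∫ ω, h t (X t ω) ∂μ) ∧
  MonotoneOn k (Set.Ici 0) ∧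
  ∀ ν : Measure ℝ,
    (∀ a b : ℝ, 0 ≤ a → a ≤ b → ν (Set.Ioc a b) = ENNReal.ofReal (k b - k a)) →
    ν {0} = 0 →
    ∀ t : ℝ, 0 ≤ t → (∫ s in Set.Icc 0 t, ((∫ ω, h s (X s ω) ∂μ) - l s) ∂ν) = 0

/-- Solution of the Skorokhod problem with mean minimality condition and a single
upper barrier `u`.  The minimality condition `∫ (u_s - E[h(s,X_s)]) d(-k)_s = 0` is expressed
through any measure `ν` that agrees with the Lebesgue–Stieltjes measure of `-k` on `[0,∞)`. -/
def MeanSPUpper {Ω : Type*} [MeasurableSpace Ω] (μ : Measure Ω) (h : ℝ → ℝ → ℝ)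
    (Y : ℝ → Ω → ℝ) (u : ℝ → ℝ) (X : ℝ → Ω → ℝ) (k : ℝ → ℝ) : Prop :=
  (∀ ω, CadlagOn fun t => X t ω) ∧ CadlagOn k ∧ k 0 = 0 ∧
  (∀ t : ℝ, 0 ≤ t → ∀ ω, X t ω = Y t ω + k t) ∧
  (∀ t : ℝ, 0 ≤ t → (∫ ω, h t (X t ω) ∂μ) ≤ u t) ∧
  AntitoneOn k (Set.Ici 0) ∧
  ∀ ν : Measure ℝ,
    (∀ a b : ℝ, 0 ≤ a → a ≤ b → ν (Set.Ioc a b) = ENNReal.ofReal (k a - k b)) →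
    ν {0} = 0 →
    ∀ t : ℝ, 0 ≤ t → (∫ s in Set.Icc 0 t, (u s - ∫ ω, h s (X s ω) ∂μ) ∂ν) = 0

/-- `OscN x η q` is the number of `η`-oscillations of `x` on `[0,q]`: the largest `m`
for which there are `0 ≤ t₁ ≤ t₂ ≤ ⋯ ≤ t_{2m} ≤ q` with `|x(t_{2i}) - x(t_{2i-1})| > η`. -/
def OscN (x : ℝ → ℝ) (η q : ℝ) : ℕ :=
  sSup {m : ℕ | ∃ a b : Fin m → ℝ,
    (∀ i, 0 ≤ a i ∧ a i ≤ b i ∧ b i ≤ q) ∧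
    (∀ i j, i < j → b i ≤ a j) ∧
    ∀ i, η < |x (b i) - x (a i)|}

/-- The left limit at `t` of a càdlàg function on `[0,∞)`, with the convention
`x(0-) = x(0)`. -/
def leftLimAt {E : Type*} [TopologicalSpace E] (x : ℝ → E) (t : ℝ) : E :=
  if t = 0 then x 0 else Function.leftLim x t

/-- Convergence `xₙ → x` in the Skorokhod `J₁` topology on `D([0,∞), E)`, expressed via
the sequence characterization used in the paper. -/
def DConvOn {E : Type*} [TopologicalSpace E] (xs : ℕ → ℝ → E) (x : ℝ → E) : Prop :=
  ∀ t : ℝ, 0 ≤ t → ∃ tn : ℕ → ℝ,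
    (∀ n, 0 ≤ tn n) ∧ Filter.Tendsto tn Filter.atTop (nhds t) ∧
    ∀ t' t'' : ℕ → ℝ, (∀ n, 0 ≤ t' n) → (∀ n, 0 ≤ t'' n) →
      Filter.Tendsto t' Filter.atTop (nhds t) → Filter.Tendsto t'' Filter.atTop (nhds t) →
      (∀ n, t' n < tn n ∧ tn n ≤ t'' n) →
      Filter.Tendsto (fun n => xs n (t' n)) Filter.atTop (nhds (leftLimAt x t)) ∧
      Filter.Tendsto (fun n => xs n (t'' n)) Filter.atTop (nhds (x t))

/-!
At a fixed time `t` the function `z ↦ E[h(t, Y_t + z)]` is strictly increasing, so it turns the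
constraint `E[h(t, X_t)] ∈ [l_t, u_t]` into `k_t ∈ [l̄_t - E[Y_t], ū_t - E[Y_t]]`. The sign
condition on jumps says that `k` moves off `k_{t-}` only onto the endpoint of this interval nearest
to `k_{t-}`; hence `k_t` is the projection of `k_{t-}` onto the interval.
-/

theorem eq_max_min_of_mem_Icc {α : Type*} [LinearOrder α] {a b c x : α} (hx : x ∈ Icc a b)
    (hlt : c < x → x = a) (hgt : x < c → x = b) : x = max (min c b) a := by
  rcases lt_trichotomy c x with hcx | rfl | hxc
  · obtain rfl := hlt hcx
    exact (max_eq_right ((min_le_left c b).trans hcx.le)).symm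
  · rw [min_eq_left hx.2, max_eq_left hx.1]
  · obtain rfl := hgt hxc
    rw [min_eq_right hxc.le, max_eq_left hx.1]

section Integral

variable {Ω : Type*} [MeasurableSpace Ω] {μ : Measure Ω}

theorem strictMono_integral [NeZero μ] {ι : Type*} [Preorder ι] {F : ι → Ω → ℝ}
    (hmono : ∀ ω, StrictMono (F · ω)) (hint : ∀ i, Integrable (F i) μ) :
    StrictMono fun i ↦ ∫ ω, F i ω ∂μ := by
  intro i j hij
  have hpos : ∀ ω, 0 < F j ω - F i ω := fun ω ↦ sub_pos.2 (hmono ω hij)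
  have hsupport : support (fun ω ↦ F j ω - F i ω) = univ :=
    eq_univ_of_forall fun ω ↦ (hpos ω).ne'
  have hdiff : 0 < ∫ ω, F j ω - F i ω ∂μ := by
    rw [integral_pos_iff_support_of_nonneg (fun ω ↦ (hpos ω).le) ((hint j).sub (hint i)),
      hsupport]
    exact NeZero.pos (μ univ)
  rwa [integral_sub (hint j) (hint i), sub_pos] at hdiff

variable [IsFiniteMeasure μ]

theorem integrable_comp_of_norm_le_mul_one_add_norm {E F : Type*} [NormedAddCommGroup E]
    [NormedAddCommGroup F] {f : Ω → E} {g : E → F} {M : ℝ} (hf : Integrable f μ)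
    (hgf : AEStronglyMeasurable (fun ω ↦ g (f ω)) μ) (hg : ∀ x, ‖g x‖ ≤ M * (1 + ‖x‖)) :
    Integrable (fun ω ↦ g (f ω)) μ :=
  (((integrable_const 1).add hf.norm).const_mul M).mono' hgf (.of_forall fun ω ↦ hg (f ω))

theorem strictMono_integral_comp_add [NeZero μ] {f : Ω → ℝ} {g : ℝ → ℝ} {M : ℝ}
    (hg : StrictMono g) (hgrowth : ∀ x, |g x| ≤ M * (1 + |x|)) (hf : Integrable f μ) :
    StrictMono fun z ↦ ∫ ω, g (f ω + z) ∂μ := by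
  refine strictMono_integral (fun ω ↦ hg.comp fun _ _ hab ↦ add_lt_add_right hab (f ω)) fun z ↦ ?_
  have hfz : Integrable (fun ω ↦ f ω + z) μ := hf.add (integrable_const z)
  exact integrable_comp_of_norm_le_mul_one_add_norm hfz
    (hg.monotone.measurable.comp_aemeasurable hfz.aemeasurable).aestronglyMeasurable hgrowth

end Integral

section Jump

variable {Ω : Type*} [MeasurableSpace Ω] {μ : Measure Ω} {h : ℝ → ℝ → ℝ} {Y X : ℝ → Ω → ℝ}
  {l u k : ℝ → ℝ} {t : ℝ}

namespace MeanSP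

theorem integral_mem_Icc (hsol : MeanSP μ h Y l u X k) (ht : 0 ≤ t) :
    ∫ ω, h t (X t ω) ∂μ ∈ Icc (l t) (u t) := by
  obtain ⟨-, -, -, -, hmem, -⟩ := hsol
  exact hmem t ht

theorem integral_eq_lower_of_jump_pos (hsol : MeanSP μ h Y l u X k) (ht : 0 < t)
    (hjump : 0 < k t - leftLim k t) : ∫ ω, h t (X t ω) ∂μ = l t := by
  have hmem := hsol.integral_mem_Icc ht.le
  obtain ⟨-, -, -, -, -, -, hsign⟩ := hsol
  by_contra hne
  exact hjump.not_ge ((hsign t ht).2 (hmem.1.lt_of_ne' hne))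

theorem integral_eq_upper_of_jump_neg (hsol : MeanSP μ h Y l u X k) (ht : 0 < t)
    (hjump : k t - leftLim k t < 0) : ∫ ω, h t (X t ω) ∂μ = u t := by
  have hmem := hsol.integral_mem_Icc ht.le
  obtain ⟨-, -, -, -, -, -, hsign⟩ := hsol
  by_contra hne
  exact hjump.not_ge ((hsign t ht).1 (hmem.2.lt_of_ne hne))

theorem integral_comp_eq_integral_comp_add (hsol : MeanSP μ h Y l u X k) (ht : 0 ≤ t) :
    ∫ ω, h t (X t ω) ∂μ = ∫ ω, h t (Y t ω + k t) ∂μ := by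
  obtain ⟨-, -, -, hX, -⟩ := hsol
  simp only [hX t ht]

theorem eq_max_min_leftLim {a b : ℝ} (hsol : MeanSP μ h Y l u X k) (ht : 0 < t)
    (hmono : StrictMono fun z ↦ ∫ ω, h t (Y t ω + z) ∂μ)
    (ha : ∫ ω, h t (Y t ω + a) ∂μ = l t) (hb : ∫ ω, h t (Y t ω + b) ∂μ = u t) :
    k t = max (min (leftLim k t) b) a := by
  have hk := hsol.integral_comp_eq_integral_comp_add ht.le
  have hmem := hsol.integral_mem_Icc ht.le
  rw [hk, ← ha, ← hb] at hmem
  refine eq_max_min_of_mem_Icc ⟨hmono.le_iff_le.1 hmem.1, hmono.le_iff_le.1 hmem.2⟩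
    (fun hlt ↦ hmono.injective ?_) (fun hgt ↦ hmono.injective ?_)
  · exact hk.symm.trans ((hsol.integral_eq_lower_of_jump_pos ht (sub_pos.2 hlt)).trans ha.symm)
  · exact hk.symm.trans ((hsol.integral_eq_upper_of_jump_neg ht (sub_neg.2 hgt)).trans hb.symm)

end MeanSP

theorem stmt_10_general [IsFiniteMeasure μ] [NeZero μ] {M lbar ubar : ℝ} (ht : 0 < t)
    (hh : StrictMono (h t)) (hgrowth : ∀ x, |h t x| ≤ M * (1 + |x|)) (hY : Integrable (Y t) μ)
    (hlbar : ∫ ω, h t (Y t ω - (∫ ω', Y t ω' ∂μ) + lbar) ∂μ = l t)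
    (hubar : ∫ ω, h t (Y t ω - (∫ ω', Y t ω' ∂μ) + ubar) ∂μ = u t)
    (hsol : MeanSP μ h Y l u X k) :
    (0 < k t - leftLim k t → ∫ ω, h t (X t ω) ∂μ = l t) ∧
      (k t - leftLim k t < 0 → ∫ ω, h t (X t ω) ∂μ = u t) ∧
      k t = max (min (leftLim k t) (ubar - ∫ ω, Y t ω ∂μ)) (lbar - ∫ ω, Y t ω ∂μ) := by
  simp only [sub_add_eq_add_sub, add_sub_assoc] at hlbar hubar
  exact ⟨hsol.integral_eq_lower_of_jump_pos ht, hsol.integral_eq_upper_of_jump_neg ht,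
    hsol.eq_max_min_leftLim ht (strictMono_integral_comp_add hh hgrowth hY) hlbar hubar⟩

end Jump

/-- at a positive jump of `k` the lower constraint is attained, at a negative
jump the upper one, and `k_t = max(min(k_{t-}, ū_t - E Y_t), l̄_t - E Y_t)`. -/
theorem stmt_10 {Ω : Type*} [MeasurableSpace Ω] (μ : Measure Ω) [IsProbabilityMeasure μ]
    (h : ℝ → ℝ → ℝ) (Mh Lh ch Ch : ℝ) (hH : CondH h Mh Lh ch Ch)
    (Y : ℝ → Ω → ℝ) (hY : NiceProcess μ Y)
    (l u : ℝ → ℝ) (hl : CadlagOn l) (hu : CadlagOn u)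
    (hlu : ∀ t : ℝ, 0 ≤ t → l t ≤ u t)
    (h0 : (∫ ω, h 0 (Y 0 ω) ∂μ) ∈ Set.Icc (l 0) (u 0))
    (lbar ubar : ℝ → ℝ)
    (hlbar : ∀ t : ℝ, 0 ≤ t → (∫ ω, h t (Y t ω - (∫ ω', Y t ω' ∂μ) + lbar t) ∂μ) = l t)
    (hubar : ∀ t : ℝ, 0 ≤ t → (∫ ω, h t (Y t ω - (∫ ω', Y t ω' ∂μ) + ubar t) ∂μ) = u t)
    (X : ℝ → Ω → ℝ) (k : ℝ → ℝ) (hsol : MeanSP μ h Y l u X k) :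
    ∀ t : ℝ, 0 < t →
      (0 < k t - Function.leftLim k t → (∫ ω, h t (X t ω) ∂μ) = l t) ∧
      (k t - Function.leftLim k t < 0 → (∫ ω, h t (X t ω) ∂μ) = u t) ∧
      k t = max (min (Function.leftLim k t) (ubar t - ∫ ω, Y t ω ∂μ))
        (lbar t - ∫ ω, Y t ω ∂μ) :=
  fun _ ht ↦ stmt_10_general ht (hH.strict_mono _ ht.le) (hH.growth _ · ht.le)
    (hY.integrable _ ht.le) (hlbar _ ht.le) (hubar _ ht.le) hsol
end
end

section
/- Let l : [0,∞) → ℝ be càdlàg with E[h(0, Y_0)] ≥ l_0. Then there exists a unique solution (X, k) of the Skorokhod problem with mean minimality condition and lower barrier l associated with (h, Y, l); moreover k_t = sup_{s≤t} (l̄_s − E[Y_s])⁺ for every t ≥ 0, where l̄ : [0,∞) → ℝ is the unique function with E[h(s, Y_s − E[Y_s] + l̄_s)] = l_s for all s ≥ 0. -/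
open MeasureTheory Filter Set Function Topology

noncomputable section

/-!
Put `Φ_t(a) = E[h(t, Y_t + a)]` and `L_t = l̄_t - E[Y_t]`, so that `Φ_t(L_t) = l_t`. As `Φ_t` is
strictly increasing, the constraint `E[h(t, X_t)] ≥ l_t` says `k_t ≥ L_t`, and the problem becomes
the classical one-sided Skorokhod reflection of a deterministic path, whose solution is
`K_t = sup_{s ≤ t} L_s⁺`.

* `K` is a solution because a running supremum increases only at times where it equals `L`: on
  `{L < K}` it has no jump and stays constant for a short while to the right.
* If `k` is a solution then `k ≥ L` and monotonicity give `k ≥ K`. Conversely, with `c = K_t`, the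
  constraint is slack at every `s ≤ t` with `k_s > c`, while `dk` charges `{s ≤ t : k_s > c}` with
  mass at least `k_t - c`; flatness of `k` off the contact set thus forces `k_t ≤ c`.

That `L` is càdlàg follows from the bi-Lipschitz bounds on `Φ_t` and from Vitali's theorem, by which
`Y` is Cauchy in `L¹` along one-sided limits.
-/

section Cadlag

/-- The one-sided neighbourhood filters along which a càdlàg function on `[0,∞)` has a limit;
they let right-continuity and existence of left limits be handled by a single argument. -/
inductive OneSidedNhds : Filter ℝ → Prop
  | ge {t : ℝ} (ht : 0 ≤ t) : OneSidedNhds (𝓝[≥] t)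
  | lt {t : ℝ} (ht : 0 < t) : OneSidedNhds (𝓝[<] t)

namespace OneSidedNhds

variable {F : Filter ℝ}

lemma neBot (hF : OneSidedNhds F) : F.NeBot := by
  cases hF <;> infer_instance

lemma isCountablyGenerated (hF : OneSidedNhds F) : F.IsCountablyGenerated := by
  cases hF <;> infer_instance

lemma exists_le_nhds (hF : OneSidedNhds F) : ∃ t, F ≤ 𝓝 t := by
  cases hF <;> exact ⟨_, nhdsWithin_le_nhds⟩

lemma exists_Icc_mem (hF : OneSidedNhds F) : ∃ q, 0 ≤ q ∧ Icc 0 q ∈ F := by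
  cases hF with
  | @ge t ht =>
    exact ⟨t + 1, by positivity,
      mem_of_superset (Icc_mem_nhdsGE (lt_add_one t)) (Icc_subset_Icc_left ht)⟩
  | @lt t ht => exact ⟨t, ht.le, mem_of_superset (Ico_mem_nhdsLT ht) Ico_subset_Icc_self⟩

lemma Ici_zero_mem (hF : OneSidedNhds F) : Ici 0 ∈ F :=
  let ⟨_, _, hq⟩ := hF.exists_Icc_mem
  mem_of_superset hq Icc_subset_Ici_self

lemma tendsto_abs_sub (hF : OneSidedNhds F) :
    Tendsto (fun p : ℝ × ℝ => |p.1 - p.2|) (F ×ˢ F) (𝓝 0) := by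
  obtain ⟨t, ht⟩ := hF.exists_le_nhds
  simpa using ((tendsto_fst.mono_right ht).sub (tendsto_snd.mono_right ht)).abs

end OneSidedNhds

variable {E : Type*}

lemma cadlagOn_iff_exists_tendsto [TopologicalSpace E] [T1Space E] {f : ℝ → E} :
    CadlagOn f ↔ ∀ F, OneSidedNhds F → ∃ z, Tendsto f F (𝓝 z) := by
  refine ⟨fun hf F hF => ?_, fun H => ⟨fun t ht => ?_, fun t ht => H _ (.lt ht)⟩⟩
  · cases hF with
    | ge ht => exact ⟨_, hf.1 _ ht⟩
    | lt ht => exact hf.2 _ ht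
  · obtain ⟨z, hz⟩ := H _ (.ge ht)
    have hzt : f t = z := pure_le_nhds_iff.1 (hz.mono_left (pure_le_nhdsWithin self_mem_Ici))
    rw [ContinuousWithinAt, hzt]
    exact hz

lemma cadlagOn_iff_tendsto_dist [MetricSpace E] [CompleteSpace E] {f : ℝ → E} :
    CadlagOn f ↔ ∀ F, OneSidedNhds F →
      Tendsto (fun p : ℝ × ℝ => dist (f p.1) (f p.2)) (F ×ˢ F) (𝓝 0) := by
  rw [cadlagOn_iff_exists_tendsto]
  refine forall₂_congr fun F hF => ?_
  have := hF.neBot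
  rw [← cauchy_map_iff_exists_tendsto, cauchy_map_iff', Metric.uniformity_eq_comap_nhds_zero,
    tendsto_comap_iff]
  rfl

lemma cadlagOn_of_dist_le [MetricSpace E] [CompleteSpace E] {f : ℝ → E} {m : ℝ → ℝ → ℝ}
    (hle : ∀ s t, 0 ≤ s → 0 ≤ t → dist (f s) (f t) ≤ m s t)
    (hm : ∀ F, OneSidedNhds F → Tendsto (fun p : ℝ × ℝ => m p.1 p.2) (F ×ˢ F) (𝓝 0)) :
    CadlagOn f := by
  refine cadlagOn_iff_tendsto_dist.2 fun F hF => squeeze_zero' ?_ ?_ (hm F hF)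
  · exact .of_forall fun _ => dist_nonneg
  · filter_upwards [prod_mem_prod hF.Ici_zero_mem hF.Ici_zero_mem] with p hp
    exact hle p.1 p.2 hp.1 hp.2

namespace CadlagOn

lemma congr [TopologicalSpace E] [T1Space E] {f g : ℝ → E} (hf : CadlagOn f)
    (hfg : EqOn f g (Ici 0)) : CadlagOn g := by
  rw [cadlagOn_iff_exists_tendsto] at hf ⊢
  exact fun F hF => (hf F hF).imp fun z hz => hz.congr' (hfg.eventuallyEq_of_mem hF.Ici_zero_mem)

protected lemma add [TopologicalSpace E] [Add E] [ContinuousAdd E] {f g : ℝ → E}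
    (hf : CadlagOn f) (hg : CadlagOn g) : CadlagOn fun t => f t + g t :=
  ⟨fun t ht => (hf.1 t ht).add (hg.1 t ht), fun t ht =>
    let ⟨_, hx⟩ := hf.2 t ht
    let ⟨_, hy⟩ := hg.2 t ht
    ⟨_, hx.add hy⟩⟩

protected lemma sub [TopologicalSpace E] [Sub E] [ContinuousSub E] {f g : ℝ → E}
    (hf : CadlagOn f) (hg : CadlagOn g) : CadlagOn fun t => f t - g t :=
  ⟨fun t ht => (hf.1 t ht).sub (hg.1 t ht), fun t ht =>
    let ⟨_, hx⟩ := hf.2 t ht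
    let ⟨_, hy⟩ := hg.2 t ht
    ⟨_, hx.sub hy⟩⟩

lemma isBounded_image_Icc [PseudoMetricSpace E] {f : ℝ → E} (hf : CadlagOn f) (t : ℝ) :
    Bornology.IsBounded (f '' Icc 0 t) := by
  refine isCompact_Icc.induction_on (p := fun s => Bornology.IsBounded (f '' s)) (by simp)
    (fun s u hsu hu => hu.subset (image_mono hsu))
    (fun s u hs hu => by rw [image_union]; exact hs.union hu) fun x hx => ?_
  obtain ⟨U, hU, hUb⟩ := Metric.exists_isBounded_image_of_tendsto (hf.1 x hx.1)
  rcases hx.1.eq_or_lt with rfl | hx0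
  · exact ⟨U, nhdsWithin_mono _ Icc_subset_Ici_self hU, hUb⟩
  · obtain ⟨z, hz⟩ := hf.2 x hx0
    obtain ⟨V, hV, hVb⟩ := Metric.exists_isBounded_image_of_tendsto hz
    refine ⟨V ∪ U, mem_nhdsWithin_of_mem_nhds ?_, by rw [image_union]; exact hVb.union hUb⟩
    rw [← nhdsLT_sup_nhdsGE]
    exact union_mem_sup hV hU

end CadlagOn

lemma tendsto_natCeil_mul_div_nhdsGE {s : ℝ} (hs : 0 ≤ s) :
    Tendsto (fun n : ℕ => (⌈s * n⌉₊ : ℝ) / n) atTop (𝓝[≥] s) := by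
  refine tendsto_nhdsWithin_iff.2
    ⟨(tendsto_nat_ceil_mul_div_atTop hs).comp tendsto_natCast_atTop_atTop, ?_⟩
  filter_upwards [eventually_gt_atTop 0] with n hn
  have hn' : (0 : ℝ) < n := Nat.cast_pos.2 hn
  exact (le_div_iff₀ hn').2 (Nat.le_ceil _)

lemma aestronglyMeasurable_Ici_of_rightContinuous [TopologicalSpace E]
    [TopologicalSpace.PseudoMetrizableSpace E] {f : ℝ → E}
    (hf : ∀ t, 0 ≤ t → ContinuousWithinAt f (Ici t) t) (ν : Measure ℝ) :
    AEStronglyMeasurable f (ν.restrict (Ici 0)) := by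
  have hdiscr (n : ℕ) : StronglyMeasurable fun s : ℝ => f ((⌈s * n⌉₊ : ℝ) / n) :=
    (StronglyMeasurable.of_discrete (f := fun m : ℕ => f ((m : ℝ) / n))).comp_measurable
      (Nat.measurable_ceil.comp (measurable_id.mul_const _))
  refine aestronglyMeasurable_of_tendsto_ae atTop (fun n => (hdiscr n).aestronglyMeasurable) ?_
  filter_upwards [ae_restrict_mem measurableSet_Ici] with s hs
  exact (hf s hs).tendsto.comp (tendsto_natCeil_mul_div_nhdsGE hs)

lemma CadlagOn.integrableOn_Icc [NormedAddCommGroup E] {f : ℝ → E} (hf : CadlagOn f)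
    {ν : Measure ℝ} {t : ℝ} (hν : ν (Icc 0 t) ≠ ⊤) : IntegrableOn f (Icc 0 t) ν := by
  obtain ⟨C, hC⟩ := (hf.isBounded_image_Icc t).exists_norm_le
  refine IntegrableOn.of_bound hν.lt_top
    ((aestronglyMeasurable_Ici_of_rightContinuous hf.1 ν).mono_measure
      (Measure.restrict_mono Icc_subset_Ici_self le_rfl)) C ?_
  filter_upwards [ae_restrict_mem measurableSet_Icc] with s hs
  exact hC _ (mem_image_of_mem f hs)

end Cadlag

section StieltjesMeasure

/-- `ν` is the Lebesgue–Stieltjes measure of `k` on `[0,∞)`, with the convention `k(0-) = k(0)`: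
there is no atom at `0`.  What `ν` does on `(-∞,0)` is left free. -/
def IsStieltjesMeasureOn (k : ℝ → ℝ) (ν : Measure ℝ) : Prop :=
  (∀ a b : ℝ, 0 ≤ a → a ≤ b → ν (Ioc a b) = ENNReal.ofReal (k b - k a)) ∧ ν {0} = 0

/-- The extension to `ℝ`, by its value at `0`, of a right-continuous nondecreasing function on
`[0,∞)`; it realises the Lebesgue–Stieltjes measure of the function. -/
def stieltjesOfMonotoneOn (k : ℝ → ℝ) (hkm : MonotoneOn k (Ici 0))
    (hkr : ∀ t, 0 ≤ t → ContinuousWithinAt k (Ici t) t) : StieltjesFunction ℝ where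
  toFun s := k (max s 0)
  mono' _ _ hab :=
    hkm (mem_Ici.2 (le_max_right _ _)) (mem_Ici.2 (le_max_right _ _)) (max_le_max_right 0 hab)
  right_continuous' _ := (hkr _ (le_max_right _ _)).comp (t := Ici (max _ 0))
    (continuous_id.max continuous_const).continuousWithinAt
    fun _ hy => mem_Ici.2 (max_le_max_right 0 (mem_Ici.1 hy))

variable {k : ℝ → ℝ} {ν : Measure ℝ}

lemma stieltjesOfMonotoneOn_apply_of_nonneg (hkm : MonotoneOn k (Ici 0))
    (hkr : ∀ t, 0 ≤ t → ContinuousWithinAt k (Ici t) t) {s : ℝ} (hs : 0 ≤ s) :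
    stieltjesOfMonotoneOn k hkm hkr s = k s := by
  change k (max s 0) = k s
  rw [max_eq_left hs]

lemma isStieltjesMeasureOn_stieltjesOfMonotoneOn (hkm : MonotoneOn k (Ici 0))
    (hkr : ∀ t, 0 ≤ t → ContinuousWithinAt k (Ici t) t) :
    IsStieltjesMeasureOn k (stieltjesOfMonotoneOn k hkm hkr).measure := by
  set f := stieltjesOfMonotoneOn k hkm hkr
  have hf {s : ℝ} (hs : 0 ≤ s) : f s = k s := stieltjesOfMonotoneOn_apply_of_nonneg hkm hkr hs
  refine ⟨fun a b ha hab => ?_, ?_⟩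
  · rw [f.measure_Ioc, hf ha, hf (ha.trans hab)]
  · have hf0 : f 0 ≤ leftLim f 0 :=
      calc f 0 = f (-1) := by change k (max 0 0) = k (max (-1) 0); norm_num
        _ ≤ leftLim f 0 := f.mono.le_leftLim (by norm_num)
    rw [f.measure_singleton, ENNReal.ofReal_eq_zero]
    exact sub_nonpos.2 hf0

lemma IsStieltjesMeasureOn.measure_singleton_le (hν : IsStieltjesMeasureOn k ν) {s z : ℝ}
    (hs : 0 < s) (hz : Tendsto k (𝓝[<] s) (𝓝 z)) : ν {s} ≤ ENNReal.ofReal (k s - z) := by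
  refine ge_of_tendsto (ENNReal.tendsto_ofReal (tendsto_const_nhds.sub hz)) ?_
  filter_upwards [Ico_mem_nhdsLT hs] with r hr
  rw [← hν.1 r s hr.1 hr.2.le]
  exact measure_mono (singleton_subset_iff.2 ⟨hr.2, le_rfl⟩)

lemma ofReal_sub_le_measure_Iic_inter_preimage_Ioi (f : StieltjesFunction ℝ) {a c t : ℝ}
    (ha : f a ≤ c) (ht : c < f t) :
    ENNReal.ofReal (f t - c) ≤ f.measure (Iic t ∩ f ⁻¹' Ioi c) := by
  have hlb {s : ℝ} (hs : c < f s) : a ≤ s := (f.mono.reflect_lt (ha.trans_lt hs)).le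
  have hbdd : BddBelow (f ⁻¹' Ioi c) := ⟨a, fun s hs => hlb hs⟩
  have hne : (f ⁻¹' Ioi c).Nonempty := ⟨t, ht⟩
  set τ := sInf (f ⁻¹' Ioi c)
  rcases lt_or_ge c (f τ) with hτc | hτc
  · have hleft : leftLim f τ ≤ c := by
      refine le_of_tendsto (f.mono.tendsto_leftLim τ) ?_
      filter_upwards [self_mem_nhdsWithin] with r hr
      exact not_lt.1 fun hrc => notMem_of_lt_csInf hr hbdd hrc
    calc ENNReal.ofReal (f t - c) ≤ ENNReal.ofReal (f t - leftLim f τ) := by gcongr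
      _ = f.measure (Icc τ t) := (f.measure_Icc τ t).symm
      _ ≤ f.measure (Iic t ∩ f ⁻¹' Ioi c) :=
        measure_mono fun s hs => ⟨hs.2, hτc.trans_le (f.mono hs.1)⟩
  · have hsub : Ioc τ t ⊆ Iic t ∩ f ⁻¹' Ioi c := by
      rintro s ⟨hτs, hst⟩
      obtain ⟨r, hr, hrs⟩ := exists_lt_of_csInf_lt hne hτs
      exact ⟨hst, lt_of_lt_of_le hr (f.mono hrs.le)⟩
    calc ENNReal.ofReal (f t - c) ≤ ENNReal.ofReal (f t - f τ) := by gcongr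
      _ = f.measure (Ioc τ t) := (f.measure_Ioc τ t).symm
      _ ≤ f.measure (Iic t ∩ f ⁻¹' Ioi c) := measure_mono hsub

/- The intervals `(s, q s)` cover all of `U` but a countable set, since the points left over are
the left endpoints of disjoint intervals. -/
lemma measure_eq_zero_of_forall_exists_Ico_eq_zero {α : Type*} [LinearOrder α] [TopologicalSpace α]
    [OrderTopology α] [SecondCountableTopology α] [MeasurableSpace α] {ν : Measure α} {U : Set α}
    (hU : ∀ s ∈ U, ∃ q > s, ν (Ico s q) = 0) : ν U = 0 := by
  choose! q hq hνq using hU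
  set V := ⋃ s ∈ U, Ioo s (q s) with hV
  have hνV : ν V = 0 := by
    obtain ⟨T, hTU, hTc, hT⟩ :=
      TopologicalSpace.isOpen_biUnion_countable U (fun s => Ioo s (q s)) fun _ _ => isOpen_Ioo
    rw [hV, ← hT, measure_biUnion_null_iff hTc]
    exact fun s hs => measure_mono_null Ioo_subset_Ico_self (hνq s (hTU hs))
  have hdisj : (U \ V).PairwiseDisjoint fun s => Ioo s (q s) := by
    have hlt {s s' : α} (hs : s ∈ U \ V) (hs' : s' ∈ U \ V) (hss' : s < s') : q s ≤ s' :=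
      not_lt.1 fun h => hs'.2 (mem_biUnion hs.1 ⟨hss', h⟩)
    intro s hs s' hs' hne
    refine disjoint_left.2 fun r hr hr' => ?_
    rcases hne.lt_or_gt with hss' | hs's
    · exact ((hlt hs hs' hss').trans_lt hr'.1).not_gt hr.2
    · exact ((hlt hs' hs hs's).trans_lt hr.1).not_gt hr'.2
  have hcount : (U \ V).Countable := hdisj.countable_of_Ioo fun s hs => hq s hs.1
  have hνUV : ν (U \ V) = 0 := by
    rw [← biUnion_of_singleton (U \ V), measure_biUnion_null_iff hcount]
    exact fun s hs =>
      measure_mono_null (singleton_subset_iff.2 (left_mem_Ico.2 (hq s hs.1))) (hνq s hs.1)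
  exact measure_mono_null (fun s hs => (em (s ∈ V)).imp id fun hsV => ⟨hs, hsV⟩)
    (measure_union_null hνV hνUV)

end StieltjesMeasure

section FlatOff

/-- The nondecreasing function `k` is flat off `{g = 0}`: its Lebesgue–Stieltjes measure on
`[0,∞)` does not charge the set where the nonnegative function `g` is positive. -/
def FlatOff (g k : ℝ → ℝ) : Prop :=
  ∀ ν : Measure ℝ, IsStieltjesMeasureOn k ν → ∀ t, 0 ≤ t → ∫ s in Icc 0 t, g s ∂ν = 0

lemma FlatOff.le_of_forall_pos {g k : ℝ → ℝ} (hgk : FlatOff g k) (hg : CadlagOn g)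
    (hg0 : ∀ s, 0 ≤ s → 0 ≤ g s) (hkm : MonotoneOn k (Ici 0))
    (hkr : ∀ s, 0 ≤ s → ContinuousWithinAt k (Ici s) s) {c t : ℝ} (hc : k 0 ≤ c) (ht : 0 ≤ t)
    (hpos : ∀ s ∈ Icc 0 t, c < k s → 0 < g s) : k t ≤ c := by
  by_contra! hct
  set f := stieltjesOfMonotoneOn k hkm hkr
  have hf {s : ℝ} (hs : 0 ≤ s) : f s = k s := stieltjesOfMonotoneOn_apply_of_nonneg hkm hkr hs
  have hint : ∫ s in Icc 0 t, g s ∂f.measure = 0 :=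
    hgk _ (isStieltjesMeasureOn_stieltjesOfMonotoneOn hkm hkr) t ht
  have hsub : Iic t ∩ f ⁻¹' Ioi c ⊆ support g ∩ Icc 0 t := by
    rintro s ⟨hst, hcs⟩
    have hs0 : 0 ≤ s := (f.mono.reflect_lt ((hf le_rfl).trans_le hc |>.trans_lt hcs)).le
    exact ⟨(hpos s ⟨hs0, hst⟩ (hf hs0 ▸ hcs)).ne', hs0, hst⟩
  refine hint.not_gt <| (setIntegral_pos_iff_support_of_nonneg_ae ?_
    (hg.integrableOn_Icc (measure_Icc_lt_top).ne)).2 ?_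
  · filter_upwards [ae_restrict_mem measurableSet_Icc] with s hs using hg0 s hs.1
  · calc (0 : ENNReal) < ENNReal.ofReal (f t - c) := by
          rw [ENNReal.ofReal_pos, hf ht]
          exact sub_pos.2 hct
      _ ≤ f.measure (Iic t ∩ f ⁻¹' Ioi c) :=
        ofReal_sub_le_measure_Iic_inter_preimage_Ioi f ((hf le_rfl).trans_le hc)
          (hct.trans_eq (hf ht).symm)
      _ ≤ f.measure (support g ∩ Icc 0 t) := measure_mono hsub

end FlatOff

section RunningSup

/-- The running supremum `sup_{s ≤ t} L_s⁺` of the positive part of `L` over `[0,t]`. -/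
def runningPosSup (L : ℝ → ℝ) (t : ℝ) : ℝ :=
  sSup ((fun s => max (L s) 0) '' Icc 0 t)

variable {L : ℝ → ℝ} {s t c : ℝ}

lemma runningPosSup_nonneg (L : ℝ → ℝ) (t : ℝ) : 0 ≤ runningPosSup L t :=
  Real.sSup_nonneg (by rintro _ ⟨s, -, rfl⟩; exact le_max_right _ _)

lemma runningPosSup_le (hc : 0 ≤ c) (h : ∀ s ∈ Icc 0 t, L s ≤ c) : runningPosSup L t ≤ c :=
  Real.sSup_le (by rintro _ ⟨s, hs, rfl⟩; exact max_le (h s hs) hc) hc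

lemma le_runningPosSup (hb : BddAbove (L '' Icc 0 t)) (hs : s ∈ Icc 0 t) :
    L s ≤ runningPosSup L t := by
  obtain ⟨C, hC⟩ := hb
  refine (le_max_left _ _).trans (le_csSup ⟨max C 0, ?_⟩ (mem_image_of_mem _ hs))
  rintro _ ⟨r, hr, rfl⟩
  exact max_le_max_right 0 (hC (mem_image_of_mem L hr))

lemma monotone_runningPosSup (hb : ∀ t, BddAbove (L '' Icc 0 t)) : Monotone (runningPosSup L) :=
  fun _ t hst => runningPosSup_le (runningPosSup_nonneg L t) fun _ hr =>
    le_runningPosSup (hb t) ⟨hr.1, hr.2.trans hst⟩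

lemma runningPosSup_zero (hL0 : L 0 ≤ 0) : runningPosSup L 0 = 0 := by
  simp [runningPosSup, hL0]

lemma eventually_runningPosSup_le (hb : BddAbove (L '' Icc 0 s))
    (hLs : ContinuousWithinAt L (Ici s) s) (hK : runningPosSup L s ≤ c) (hLc : L s < c) :
    ∀ᶠ t in 𝓝[≥] s, runningPosSup L t ≤ c := by
  obtain ⟨q, hq, hLq⟩ := mem_nhdsGE_iff_exists_Icc_subset.1 (hLs.eventually_lt_const hLc)
  filter_upwards [Icc_mem_nhdsGE hq] with t ht
  refine runningPosSup_le ((runningPosSup_nonneg L s).trans hK) fun r hr => ?_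
  rcases le_total r s with hrs | hsr
  · exact (le_runningPosSup hb ⟨hr.1, hrs⟩).trans hK
  · exact (hLq ⟨hsr, hr.2.trans ht.2⟩).le

lemma runningPosSup_le_max_leftLim (hb : ∀ t, BddAbove (L '' Icc 0 t)) (s : ℝ) :
    runningPosSup L s ≤ max (L s) (leftLim (runningPosSup L) s) := by
  have hmono := monotone_runningPosSup hb
  have hleft : 0 ≤ leftLim (runningPosSup L) s :=
    (runningPosSup_nonneg L (s - 1)).trans (hmono.le_leftLim (sub_one_lt s))
  refine runningPosSup_le (hleft.trans (le_max_right _ _)) fun r hr => ?_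
  rcases hr.2.eq_or_lt with rfl | hrs
  · exact le_max_left _ _
  · exact le_max_of_le_right
      ((le_runningPosSup (hb r) ⟨hr.1, le_rfl⟩).trans (hmono.le_leftLim hrs))

lemma cadlagOn_runningPosSup (hL : CadlagOn L) : CadlagOn (runningPosSup L) := by
  have hb t : BddAbove (L '' Icc 0 t) := (hL.isBounded_image_Icc t).bddAbove
  have hmono := monotone_runningPosSup hb
  refine ⟨fun s hs => tendsto_order.2 ⟨fun a ha => ?_, fun a ha => ?_⟩,
    fun s _ => ⟨_, hmono.tendsto_leftLim s⟩⟩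
  · filter_upwards [self_mem_nhdsWithin] with t ht using ha.trans_le (hmono ht)
  · obtain ⟨c, hKc, hca⟩ := exists_between ha
    have hLc : L s < c := (le_runningPosSup (hb s) ⟨hs, le_rfl⟩).trans_lt hKc
    filter_upwards [eventually_runningPosSup_le (hb s) (hL.1 s hs) hKc.le hLc] with t ht
    exact ht.trans_lt hca

lemma IsStieltjesMeasureOn.exists_Ico_eq_zero_of_lt_runningPosSup (hL : CadlagOn L)
    {ν : Measure ℝ} (hν : IsStieltjesMeasureOn (runningPosSup L) ν) (hs : 0 ≤ s)
    (hLs : L s < runningPosSup L s) : ∃ q > s, ν (Ico s q) = 0 := by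
  have hb t : BddAbove (L '' Icc 0 t) := (hL.isBounded_image_Icc t).bddAbove
  have hatom : ν {s} = 0 := by
    rcases hs.eq_or_lt with rfl | hs
    · exact hν.2
    · have hleft : runningPosSup L s ≤ leftLim (runningPosSup L) s :=
        (le_max_iff.1 (runningPosSup_le_max_leftLim hb s)).resolve_left hLs.not_ge
      rw [← nonpos_iff_eq_zero, ← ENNReal.ofReal_of_nonpos (sub_nonpos.2 hleft)]
      exact hν.measure_singleton_le hs ((monotone_runningPosSup hb).tendsto_leftLim s)
  obtain ⟨q, hsq, hq⟩ := mem_nhdsGE_iff_exists_Icc_subset.1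
    (eventually_runningPosSup_le (hb s) (hL.1 s hs) le_rfl hLs)
  have hright : ν (Ioc s q) = 0 := by
    rw [hν.1 s q hs (le_of_lt hsq), ENNReal.ofReal_eq_zero, sub_nonpos]
    exact hq (right_mem_Icc.2 (le_of_lt hsq))
  refine ⟨q, hsq, measure_mono_null Ico_subset_Icc_self ?_⟩
  rw [← Icc_union_Ioc_eq_Icc le_rfl (le_of_lt hsq), Icc_self]
  exact measure_union_null hatom hright

lemma flatOff_runningPosSup (hL : CadlagOn L) {g : ℝ → ℝ}
    (hg : ∀ s, 0 ≤ s → L s = runningPosSup L s → g s = 0) : FlatOff g (runningPosSup L) := by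
  intro ν hν t _
  have hnull : ν {s | 0 ≤ s ∧ L s < runningPosSup L s} = 0 :=
    measure_eq_zero_of_forall_exists_Ico_eq_zero fun s hs =>
      hν.exists_Ico_eq_zero_of_lt_runningPosSup hL hs.1 hs.2
  refine integral_eq_zero_of_ae ?_
  filter_upwards [ae_restrict_mem measurableSet_Icc,
    ae_restrict_of_ae (measure_eq_zero_iff_ae_notMem.1 hnull)] with s hs hLs
  have hle : L s ≤ runningPosSup L s :=
    le_runningPosSup (hL.isBounded_image_Icc s).bddAbove ⟨hs.1, le_rfl⟩
  exact hg s hs.1 (hle.antisymm (not_lt.1 fun h => hLs ⟨hs.1, h⟩))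

end RunningSup

section Reflection

/-- `k` solves the deterministic Skorokhod problem of keeping the process `Φ t (k t)` above the
barrier `l`: it starts at `0`, is nondecreasing, and grows only when `Φ t (k t) = l t`. -/
structure IsReflectionTerm (Φ : ℝ → ℝ → ℝ) (l k : ℝ → ℝ) : Prop where
  cadlag : CadlagOn k
  zero : k 0 = 0
  le : ∀ t, 0 ≤ t → l t ≤ Φ t (k t)
  monotoneOn : MonotoneOn k (Ici 0)
  flatOff : FlatOff (fun t => Φ t (k t) - l t) k

variable {Φ : ℝ → ℝ → ℝ} {l L k : ℝ → ℝ}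

theorem isReflectionTerm_runningPosSup (hΦ : ∀ t, 0 ≤ t → Monotone (Φ t)) (hL : CadlagOn L)
    (hL0 : L 0 ≤ 0) (hΦL : ∀ t, 0 ≤ t → Φ t (L t) = l t) :
    IsReflectionTerm Φ l (runningPosSup L) := by
  have hb t : BddAbove (L '' Icc 0 t) := (hL.isBounded_image_Icc t).bddAbove
  exact {
    cadlag := cadlagOn_runningPosSup hL
    zero := runningPosSup_zero hL0
    le := fun t ht => (hΦL t ht).symm.trans_le (hΦ t ht (le_runningPosSup (hb t) ⟨ht, le_rfl⟩))
    monotoneOn := (monotone_runningPosSup hb).monotoneOn _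
    flatOff := flatOff_runningPosSup hL fun s hs hLs => by rw [← hLs, hΦL s hs, sub_self] }

theorem IsReflectionTerm.eq_runningPosSup (hk : IsReflectionTerm Φ l k)
    (hΦ : ∀ t, 0 ≤ t → StrictMono (Φ t)) (hΦk : CadlagOn fun t => Φ t (k t)) (hl : CadlagOn l)
    (hb : ∀ t, BddAbove (L '' Icc 0 t)) (hΦL : ∀ t, 0 ≤ t → Φ t (L t) = l t) {t : ℝ}
    (ht : 0 ≤ t) : k t = runningPosSup L t := by
  have hk0 : 0 ≤ k t := hk.zero.symm.trans_le (hk.monotoneOn self_mem_Ici ht ht)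
  refine le_antisymm ?_ (runningPosSup_le hk0 fun s hs => ?_)
  · refine hk.flatOff.le_of_forall_pos (hΦk.sub hl) (fun s hs => sub_nonneg.2 (hk.le s hs))
      hk.monotoneOn hk.cadlag.1 (hk.zero.trans_le (runningPosSup_nonneg L t)) ht fun s hs hks => ?_
    rw [sub_pos, ← hΦL s hs.1]
    exact hΦ s hs.1 ((le_runningPosSup (hb t) hs).trans_lt hks)
  · have hLk : L s ≤ k s := (hΦ s hs.1).le_iff_le.1 ((hΦL s hs.1).trans_le (hk.le s hs.1))
    exact hLk.trans (hk.monotoneOn hs.1 ht hs.2)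

end Reflection

section Vitali

variable {Ω : Type*} [MeasurableSpace Ω] {μ : Measure Ω}

lemma tendsto_integral_norm_sub_of_unifIntegrable [IsFiniteMeasure μ] {ι E : Type*}
    [NormedAddCommGroup E] {f : ι → Ω → E} (hfm : ∀ i, AEStronglyMeasurable (f i) μ)
    (hfu : UnifIntegrable f 1 μ) {G : Filter (ι × ι)} [G.IsCountablyGenerated]
    (hG : ∀ᵐ ω ∂μ, Tendsto (fun p : ι × ι => f p.1 ω - f p.2 ω) G (𝓝 0)) :
    Tendsto (fun p : ι × ι => ∫ ω, ‖f p.1 ω - f p.2 ω‖ ∂μ) G (𝓝 0) := by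
  refine tendsto_of_seq_tendsto fun p hp => ?_
  have hsubfamily (u : ℕ → ι) : UnifIntegrable (fun n => f (u n)) 1 μ := fun ε hε =>
    let ⟨δ, hδ, hle⟩ := hfu hε
    ⟨δ, hδ, fun n => hle (u n)⟩
  have hm n : AEStronglyMeasurable (f (p n).1 - f (p n).2) μ := (hfm _).sub (hfm _)
  have hdiff : UnifIntegrable (fun n => f (p n).1 - f (p n).2) 1 μ :=
    (hsubfamily fun n => (p n).1).sub (hsubfamily fun n => (p n).2) le_rfl
      (fun _ => hfm _) fun _ => hfm _
  have hlim := tendsto_Lp_finite_of_tendsto_ae le_rfl ENNReal.one_ne_top hm MemLp.zero' hdiff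
    (hG.mono fun ω hω => hω.comp hp)
  refine ((ENNReal.tendsto_toReal ENNReal.zero_ne_top).comp hlim).congr fun n => ?_
  rw [comp_apply, ← Pi.zero_def, sub_zero, toReal_eLpNorm (hm n),
    lpNorm_one_eq_integral_norm (hm n)]
  rfl

lemma NiceProcess.tendsto_integral_abs_sub [IsFiniteMeasure μ] {Y : ℝ → Ω → ℝ}
    (hY : NiceProcess μ Y) {F : Filter ℝ} (hF : OneSidedNhds F) :
    Tendsto (fun p : ℝ × ℝ => ∫ ω, |Y p.1 ω - Y p.2 ω| ∂μ) (F ×ˢ F) (𝓝 0) := by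
  obtain ⟨q, hq, hqF⟩ := hF.exists_Icc_mem
  have := hF.isCountablyGenerated
  have hpath ω : Tendsto (fun p : ℝ × ℝ => Y p.1 ω - Y p.2 ω) (F ×ˢ F) (𝓝 0) := by
    obtain ⟨z, hz⟩ := cadlagOn_iff_exists_tendsto.1 (hY.cadlag ω) F hF
    simpa using (hz.comp tendsto_fst).sub (hz.comp tendsto_snd)
  let incl : Icc 0 q × Icc 0 q → ℝ × ℝ := Prod.map Subtype.val Subtype.val
  have hrange : range incl ∈ F ×ˢ F := by
    rw [range_prodMap, Subtype.range_val]
    exact prod_mem_prod hqF hqF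
  rw [← tendsto_comap'_iff hrange]
  exact tendsto_integral_norm_sub_of_unifIntegrable (hY.unifInt q hq).aestronglyMeasurable
    (hY.unifInt q hq).unifIntegrable (.of_forall fun ω => (hpath ω).comp tendsto_comap)

end Vitali

section MeanConstraint

variable {Ω : Type*} [MeasurableSpace Ω] {μ : Measure Ω} {h : ℝ → ℝ → ℝ} {Mh Lh ch Ch : ℝ}

namespace CondH

lemma integrable_comp [IsFiniteMeasure μ] (hH : CondH h Mh Lh ch Ch) {t : ℝ} (ht : 0 ≤ t)
    {Z : Ω → ℝ} (hZ : Integrable Z μ) : Integrable (fun ω => h t (Z ω)) μ := by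
  refine (((integrable_const 1).add hZ.abs).const_mul Mh).mono'
    (hH.meas.of_uncurry_left.comp_aemeasurable hZ.aemeasurable).aestronglyMeasurable ?_
  exact .of_forall fun ω => hH.growth t (Z ω) ht

lemma abs_integral_sub_le [IsProbabilityMeasure μ] (hH : CondH h Mh Lh ch Ch) {s t : ℝ}
    (hs : 0 ≤ s) (ht : 0 ≤ t) {Z Z' : Ω → ℝ} (hZ : Integrable Z μ) (hZ' : Integrable Z' μ) :
    |∫ ω, h s (Z ω) ∂μ - ∫ ω, h t (Z' ω) ∂μ| ≤ Lh * |s - t| + Ch * ∫ ω, |Z ω - Z' ω| ∂μ := by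
  have hpt ω : |h s (Z ω) - h t (Z' ω)| ≤ Lh * |s - t| + Ch * |Z ω - Z' ω| :=
    (abs_sub_le _ (h t (Z ω)) _).trans
      (add_le_add (hH.lip_time t s _ ht hs) (hH.lip_upper t _ _ ht))
  have hd : Integrable (fun ω => Ch * |Z ω - Z' ω|) μ := (hZ.sub hZ').abs.const_mul Ch
  calc |∫ ω, h s (Z ω) ∂μ - ∫ ω, h t (Z' ω) ∂μ|
      = |∫ ω, (h s (Z ω) - h t (Z' ω)) ∂μ| := by
        rw [integral_sub (hH.integrable_comp hs hZ) (hH.integrable_comp ht hZ')]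
    _ ≤ ∫ ω, |h s (Z ω) - h t (Z' ω)| ∂μ := abs_integral_le_integral_abs
    _ ≤ ∫ ω, (Lh * |s - t| + Ch * |Z ω - Z' ω|) ∂μ :=
        integral_mono ((hH.integrable_comp hs hZ).sub (hH.integrable_comp ht hZ')).abs
          ((integrable_const _).add hd) hpt
    _ = Lh * |s - t| + Ch * ∫ ω, |Z ω - Z' ω| ∂μ := by
        rw [integral_add (integrable_const _) hd, integral_const, probReal_univ, one_smul,
          integral_const_mul]

lemma mul_integral_sub_le [IsFiniteMeasure μ] (hH : CondH h Mh Lh ch Ch) {t : ℝ} (ht : 0 ≤ t)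
    {Z Z' : Ω → ℝ} (hZ : Integrable Z μ) (hZ' : Integrable Z' μ) (hle : Z' ≤ Z) :
    ch * ∫ ω, (Z ω - Z' ω) ∂μ ≤ ∫ ω, h t (Z ω) ∂μ - ∫ ω, h t (Z' ω) ∂μ := by
  rw [← integral_const_mul, ← integral_sub (hH.integrable_comp ht hZ) (hH.integrable_comp ht hZ')]
  refine integral_mono ((hZ.sub hZ').const_mul ch)
    ((hH.integrable_comp ht hZ).sub (hH.integrable_comp ht hZ')) fun ω => ?_
  have hlow := hH.lip_lower t (Z ω) (Z' ω) ht
  rwa [abs_of_nonneg (sub_nonneg.2 (hle ω)),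
    abs_of_nonneg (sub_nonneg.2 ((hH.strict_mono t ht).monotone (hle ω)))] at hlow

end CondH

/-- The mean `E[h(t, Y_t + a)]` as a function of the deterministic shift `a`; the mean constraint
on `X = Y + k` reads `l t ≤ shiftedMean μ h Y t (k t)`. -/
def shiftedMean (μ : Measure Ω) (h : ℝ → ℝ → ℝ) (Y : ℝ → Ω → ℝ) (t a : ℝ) : ℝ :=
  ∫ ω, h t (Y t ω + a) ∂μ

lemma meanSPLower_iff {Y X : ℝ → Ω → ℝ} {l k : ℝ → ℝ}
    (hY : ∀ ω, CadlagOn fun t => Y t ω) :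
    MeanSPLower μ h Y l X k ↔
      (∀ t, 0 ≤ t → ∀ ω, X t ω = Y t ω + k t) ∧ IsReflectionTerm (shiftedMean μ h Y) l k := by
  have hmean (hX : ∀ t, 0 ≤ t → ∀ ω, X t ω = Y t ω + k t) t (ht : 0 ≤ t) :
      ∫ ω, h t (X t ω) ∂μ = shiftedMean μ h Y t (k t) :=
    integral_congr_ae (.of_forall fun ω => congrArg (h t) (hX t ht ω))
  have hint (hX : ∀ t, 0 ≤ t → ∀ ω, X t ω = Y t ω + k t) (ν : Measure ℝ) (t : ℝ) :
      ∫ s in Icc 0 t, (∫ ω, h s (X s ω) ∂μ - l s) ∂ν =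
        ∫ s in Icc 0 t, (shiftedMean μ h Y s (k s) - l s) ∂ν :=
    setIntegral_congr_fun measurableSet_Icc fun s hs => by simp only [hmean hX s hs.1]
  constructor
  · rintro ⟨-, hk, hk0, hX, hle, hkm, hflat⟩
    exact ⟨hX, hk, hk0, fun t ht => (hle t ht).trans_eq (hmean hX t ht), hkm,
      fun ν hν t ht => (hint hX ν t).symm.trans (hflat ν hν.1 hν.2 t ht)⟩
  · rintro ⟨hX, hk⟩
    exact ⟨fun ω => ((hY ω).add hk.cadlag).congr fun t ht => (hX t ht ω).symm, hk.cadlag, hk.zero,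
      hX, fun t ht => (hk.le t ht).trans_eq (hmean hX t ht).symm, hk.monotoneOn,
      fun ν hν hν0 t ht => (hint hX ν t).trans (hk.flatOff ν ⟨hν, hν0⟩ t ht)⟩

variable [IsProbabilityMeasure μ] {Y : ℝ → Ω → ℝ} {k : ℝ → ℝ} {s t a b : ℝ}

lemma abs_shiftedMean_sub_le (hH : CondH h Mh Lh ch Ch) (hs : 0 ≤ s) (ht : 0 ≤ t)
    (hYs : Integrable (Y s) μ) (hYt : Integrable (Y t) μ) (a b : ℝ) :
    |shiftedMean μ h Y s a - shiftedMean μ h Y t b| ≤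
      Lh * |s - t| + Ch * ∫ ω, |Y s ω - Y t ω| ∂μ + Ch * |a - b| := by
  have hYst : Integrable (fun ω => |Y s ω - Y t ω|) μ := (hYs.sub hYt).abs
  have hsa : Integrable (fun ω => Y s ω + a) μ := hYs.add (integrable_const a)
  have htb : Integrable (fun ω => Y t ω + b) μ := hYt.add (integrable_const b)
  have hmean : ∫ ω, |Y s ω + a - (Y t ω + b)| ∂μ ≤ ∫ ω, |Y s ω - Y t ω| ∂μ + |a - b| :=
    calc ∫ ω, |Y s ω + a - (Y t ω + b)| ∂μ
        ≤ ∫ ω, (|Y s ω - Y t ω| + |a - b|) ∂μ :=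
          integral_mono (hsa.sub htb).abs (hYst.add (integrable_const _)) fun ω => by
            simpa only [add_sub_add_comm] using abs_add_le (Y s ω - Y t ω) (a - b)
      _ = ∫ ω, |Y s ω - Y t ω| ∂μ + |a - b| := by
          rw [integral_add hYst (integrable_const _), integral_const, probReal_univ, one_smul]
  calc |shiftedMean μ h Y s a - shiftedMean μ h Y t b|
      ≤ Lh * |s - t| + Ch * ∫ ω, |Y s ω + a - (Y t ω + b)| ∂μ :=
        hH.abs_integral_sub_le hs ht hsa htb
    _ ≤ Lh * |s - t| + Ch * (∫ ω, |Y s ω - Y t ω| ∂μ + |a - b|) := by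
        gcongr
        exact hH.Ch_pos.le
    _ = Lh * |s - t| + Ch * ∫ ω, |Y s ω - Y t ω| ∂μ + Ch * |a - b| := by ring

lemma mul_sub_le_shiftedMean_sub (hH : CondH h Mh Lh ch Ch) (ht : 0 ≤ t)
    (hYt : Integrable (Y t) μ) (hba : b ≤ a) :
    ch * (a - b) ≤ shiftedMean μ h Y t a - shiftedMean μ h Y t b := by
  simpa [shiftedMean] using hH.mul_integral_sub_le ht (hYt.add (integrable_const a))
    (hYt.add (integrable_const b)) fun ω => add_le_add_right hba (Y t ω)

lemma strictMono_shiftedMean (hH : CondH h Mh Lh ch Ch) (ht : 0 ≤ t)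
    (hYt : Integrable (Y t) μ) : StrictMono (shiftedMean μ h Y t) := fun _ _ hba =>
  sub_pos.1 <| (mul_pos hH.ch_pos (sub_pos.2 hba)).trans_le
    (mul_sub_le_shiftedMean_sub hH ht hYt hba.le)

lemma mul_abs_sub_le_abs_shiftedMean_sub (hH : CondH h Mh Lh ch Ch) (ht : 0 ≤ t)
    (hYt : Integrable (Y t) μ) (a b : ℝ) :
    ch * |a - b| ≤ |shiftedMean μ h Y t a - shiftedMean μ h Y t b| := by
  wlog hba : b ≤ a generalizing a b
  · rw [abs_sub_comm a, abs_sub_comm (shiftedMean μ h Y t a)]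
    exact this b a (le_of_not_ge hba)
  rw [abs_of_nonneg (sub_nonneg.2 hba)]
  exact (mul_sub_le_shiftedMean_sub hH ht hYt hba).trans (le_abs_self _)

lemma mul_abs_sub_le_add_abs_shiftedMean_sub (hH : CondH h Mh Lh ch Ch) (hs : 0 ≤ s)
    (ht : 0 ≤ t) (hYs : Integrable (Y s) μ) (hYt : Integrable (Y t) μ) (a b : ℝ) :
    ch * |a - b| ≤ Lh * |s - t| + Ch * ∫ ω, |Y s ω - Y t ω| ∂μ +
      |shiftedMean μ h Y s a - shiftedMean μ h Y t b| :=
  calc ch * |a - b| ≤ |shiftedMean μ h Y t a - shiftedMean μ h Y t b| :=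
        mul_abs_sub_le_abs_shiftedMean_sub hH ht hYt a b
    _ ≤ |shiftedMean μ h Y s a - shiftedMean μ h Y t a| +
        |shiftedMean μ h Y s a - shiftedMean μ h Y t b| := by
        rw [abs_sub_comm (shiftedMean μ h Y s a)]
        exact abs_sub_le _ _ _
    _ ≤ Lh * |s - t| + Ch * ∫ ω, |Y s ω - Y t ω| ∂μ +
        |shiftedMean μ h Y s a - shiftedMean μ h Y t b| := by
        gcongr
        simpa using abs_shiftedMean_sub_le hH hs ht hYs hYt a a

lemma cadlagOn_shiftedMean_iff (hH : CondH h Mh Lh ch Ch) (hY : NiceProcess μ Y) :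
    CadlagOn (fun t => shiftedMean μ h Y t (k t)) ↔ CadlagOn k := by
  have hmod F (hF : OneSidedNhds F) : Tendsto
      (fun p : ℝ × ℝ => Lh * |p.1 - p.2| + Ch * ∫ ω, |Y p.1 ω - Y p.2 ω| ∂μ) (F ×ˢ F) (𝓝 0) := by
    simpa using (hF.tendsto_abs_sub.const_mul Lh).add
      ((hY.tendsto_integral_abs_sub hF).const_mul Ch)
  constructor
  · intro hΦ
    have hle s t (hs : 0 ≤ s) (ht : 0 ≤ t) : dist (k s) (k t) ≤
        (Lh * |s - t| + Ch * ∫ ω, |Y s ω - Y t ω| ∂μ +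
          dist (shiftedMean μ h Y s (k s)) (shiftedMean μ h Y t (k t))) / ch :=
      (le_div_iff₀' hH.ch_pos).2 (mul_abs_sub_le_add_abs_shiftedMean_sub hH hs ht
        (hY.integrable s hs) (hY.integrable t ht) _ _)
    refine cadlagOn_of_dist_le hle fun F hF => ?_
    simpa using ((hmod F hF).add (cadlagOn_iff_tendsto_dist.1 hΦ F hF)).div_const ch
  · intro hk
    have hle s t (hs : 0 ≤ s) (ht : 0 ≤ t) :
        dist (shiftedMean μ h Y s (k s)) (shiftedMean μ h Y t (k t)) ≤
          Lh * |s - t| + Ch * ∫ ω, |Y s ω - Y t ω| ∂μ + Ch * dist (k s) (k t) :=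
      abs_shiftedMean_sub_le hH hs ht (hY.integrable s hs) (hY.integrable t ht) _ _
    refine cadlagOn_of_dist_le hle fun F hF => ?_
    simpa using (hmod F hF).add ((cadlagOn_iff_tendsto_dist.1 hk F hF).const_mul Ch)

end MeanConstraint

/-- existence, uniqueness and explicit formula for the Skorokhod problem
with mean minimality condition and a single lower barrier. -/
theorem stmt_12 {Ω : Type*} [MeasurableSpace Ω] (μ : Measure Ω) [IsProbabilityMeasure μ]
    (h : ℝ → ℝ → ℝ) (Mh Lh ch Ch : ℝ) (hH : CondH h Mh Lh ch Ch)
    (Y : ℝ → Ω → ℝ) (hY : NiceProcess μ Y)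
    (l : ℝ → ℝ) (hl : CadlagOn l) (h0 : l 0 ≤ ∫ ω, h 0 (Y 0 ω) ∂μ)
    (lbar : ℝ → ℝ)
    (hlbar : ∀ s : ℝ, 0 ≤ s → (∫ ω, h s (Y s ω - (∫ ω', Y s ω' ∂μ) + lbar s) ∂μ) = l s) :
    (∃ (X : ℝ → Ω → ℝ) (k : ℝ → ℝ), MeanSPLower μ h Y l X k) ∧
    (∀ (X X' : ℝ → Ω → ℝ) (k k' : ℝ → ℝ),
      MeanSPLower μ h Y l X k → MeanSPLower μ h Y l X' k' →
      ∀ t : ℝ, 0 ≤ t → k t = k' t ∧ ∀ ω, X t ω = X' t ω) ∧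
    (∀ (X : ℝ → Ω → ℝ) (k : ℝ → ℝ), MeanSPLower μ h Y l X k →
      ∀ t : ℝ, 0 ≤ t →
        k t = sSup ((fun s => max (lbar s - ∫ ω, Y s ω ∂μ) 0) '' Set.Icc 0 t)) := by
  set L : ℝ → ℝ := fun s => lbar s - ∫ ω, Y s ω ∂μ with hL
  have hΦ t (ht : 0 ≤ t) : StrictMono (shiftedMean μ h Y t) :=
    strictMono_shiftedMean hH ht (hY.integrable t ht)
  have hΦL s (hs : 0 ≤ s) : shiftedMean μ h Y s (L s) = l s := by
    simpa only [shiftedMean, hL, add_sub, sub_add_eq_add_sub] using hlbar s hs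
  have hLc : CadlagOn L :=
    (cadlagOn_shiftedMean_iff hH hY).1 (hl.congr fun s hs => (hΦL s hs).symm)
  have hL0 : L 0 ≤ 0 := by
    rw [← (hΦ 0 le_rfl).le_iff_le, hΦL 0 le_rfl]
    simpa only [shiftedMean, add_zero] using h0
  have formula X k (hXk : MeanSPLower μ h Y l X k) t (ht : 0 ≤ t) : k t = runningPosSup L t := by
    have hk := ((meanSPLower_iff hY.cadlag).1 hXk).2
    exact hk.eq_runningPosSup hΦ ((cadlagOn_shiftedMean_iff hH hY).2 hk.cadlag) hl
      (fun q => (hLc.isBounded_image_Icc q).bddAbove) hΦL ht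
  have solution : MeanSPLower μ h Y l (fun t ω => Y t ω + runningPosSup L t) (runningPosSup L) :=
    (meanSPLower_iff hY.cadlag).2 ⟨fun _ _ _ => rfl,
      isReflectionTerm_runningPosSup (fun t ht => (hΦ t ht).monotone) hLc hL0 hΦL⟩
  refine ⟨⟨_, _, solution⟩, fun X X' k k' hX hX' t ht => ?_, formula⟩
  have hkk' : k t = k' t := (formula X k hX t ht).trans (formula X' k' hX' t ht).symm
  refine ⟨hkk', fun ω => ?_⟩
  rw [((meanSPLower_iff hY.cadlag).1 hX).1 t ht, ((meanSPLower_iff hY.cadlag).1 hX').1 t ht, hkk']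
end
end
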